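/- Stability of P-asymptotic expansions under ramification (Proposition 6.11): Let d ≥ 1, k ≥ 2 an integer, P holomorphic on D(0;ρ_0) ⊆ ℂ^d with P(0) = 0 and P not identically zero, Π = Π_P(α,β;ρ_0), and f : Π → ℂ holomorphic. Assume there exist r̃ > 0 with r_k(D(0;r̃)) ⊆ D(0;ρ_0), a sequence (g_n) of bounded holomorphic functions on D(0;r̃), and constants C_n > 0 such that |f(r_k(v)) − g_n(v)| ≤ C_n·|P(r_k(v))|^n for every n ∈ ℕ and every v in the (P∘r_k)-sector Π_{P∘r_k}(α,β;r̃). Then there exist ρ > 0 and a sequence (f_n) of bounded holomorphic functions on D(0;ρ) such that |f(x) − f_n(x)| ≤ C_n·|P(x)|^n for every n ∈ ℕ and every x ∈ Π_P(α,β;ρ); that is, f admits a P-asymptotic expansion in the estimate sense. -/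

import Mathlib

open Set Complex

noncomputable section

/-- Open polydisk of radius `r` centered at `0` in `ℂ^d`. -/
def polydisk (d : ℕ) (r : ℝ) : Set (Fin d → ℂ) :=
  {x | ∀ j, ‖x j‖ < r}

/-- The `P`-sector `Π_P(a,b;r)`. -/
def PSector (d : ℕ) (P : (Fin d → ℂ) → ℂ) (a b r : ℝ) : Set (Fin d → ℂ) :=
  {x | (∀ j, 0 < ‖x j‖ ∧ ‖x j‖ < r) ∧ P x ≠ 0 ∧
    ∃ θ ∈ Set.Ioo a b, P x = (‖P x‖ : ℂ) * Complex.exp (θ * Complex.I)}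

/-- Ramification `r_k(v) = (v₁^k, v₂, …, v_d)` (in dimension `d+1`). -/
def ramification (d k : ℕ) (v : Fin (d + 1) → ℂ) : Fin (d + 1) → ℂ :=
  fun i => if i = 0 then v 0 ^ k else v i

/-!
Let `f_n(x)` be the mean of `g_n(w, x₂, …, x_d)` over the `k`-th roots `w` of `x₁`. The points
`(w, x₂, …, x_d)` are the preimages of `x` under the ramification, so averaging the estimates for
`g_n` at these points gives the estimate for `f_n` at `x` with the same constant. By the residue
theorem the mean equals `(2πi)⁻¹ ∮ w^(k-1) (w^k - x₁)⁻¹ g_n(w, x₂, …, x_d) dw` over a circle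
enclosing all the roots, and integrating a jointly analytic function over a compact set of
parameters yields an analytic function.

For the latter, the superposition operator `φ ↦ H ∘ φ` on continuous functions inherits the power
series of `H`, and integration is a continuous linear functional of `H ∘ φ`.
-/

section Superposition

variable {𝕜 ι K E F : Type*} [NontriviallyNormedField 𝕜] [Fintype ι]
  [TopologicalSpace K] [CompactSpace K] [NormedAddCommGroup E] [NormedSpace 𝕜 E]
  [NormedAddCommGroup F] [NormedSpace 𝕜 F]

/-- The pointwise application of a continuous multilinear map `p` to continuous functions on a
compact space, `φ ↦ (t ↦ p (fun i ↦ φ i t))`, as a continuous multilinear map for the sup norms.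
These are the terms of the power series of a superposition operator. -/
def multilinearPostcomp (p : ContinuousMultilinearMap 𝕜 (fun _ : ι ↦ E) F) :
    ContinuousMultilinearMap 𝕜 (fun _ : ι ↦ C(K, E)) C(K, F) :=
  MultilinearMap.mkContinuous
    { toFun := fun φ ↦ ⟨fun t ↦ p fun i ↦ φ i t, by fun_prop⟩
      map_update_add' := fun φ i ψ₁ ψ₂ ↦ by
        ext t
        simp [Function.apply_update (fun _ (ψ : C(K, E)) ↦ ψ t)]
      map_update_smul' := fun φ i c ψ ↦ by
        ext t
        simp [Function.apply_update (fun _ (ψ : C(K, E)) ↦ ψ t)] }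
    ‖p‖ fun φ ↦ (ContinuousMap.norm_le _ (by positivity)).2 fun t ↦
      p.le_opNorm_mul_prod_of_le fun i ↦ (φ i).norm_coe_le_norm t

lemma norm_multilinearPostcomp_le (p : ContinuousMultilinearMap 𝕜 (fun _ : ι ↦ E) F) :
    ‖(multilinearPostcomp p : ContinuousMultilinearMap 𝕜 (fun _ : ι ↦ C(K, E)) C(K, F))‖ ≤ ‖p‖ :=
  MultilinearMap.mkContinuous_norm_le _ (norm_nonneg p) _

lemma exists_superposition_hasFPowerSeriesOnBall [CompleteSpace F] {H : E → F}
    {p : FormalMultilinearSeries 𝕜 E F} {y : E} {R : ENNReal}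
    (hH : HasFPowerSeriesOnBall H p y R) :
    ∃ Q : C(K, E) → C(K, F),
      HasFPowerSeriesOnBall Q (fun n ↦ multilinearPostcomp (p n)) (.const K y) R ∧
      ∀ φ ∈ Metric.eball (.const K y) R, ∀ t, Q φ t = H (φ t) := by
  let q : FormalMultilinearSeries 𝕜 C(K, E) C(K, F) := fun n ↦ multilinearPostcomp (p n)
  have hR : R ≤ q.radius := hH.r_le.trans <|
    FormalMultilinearSeries.radius_le_of_le fun n ↦ norm_multilinearPostcomp_le (p n)
  have hq : HasFPowerSeriesOnBall q.sum q 0 R :=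
    (q.hasFPowerSeriesOnBall (hH.r_pos.trans_le hR)).mono hH.r_pos hR
  have hQ := hq.comp_sub (.const K y)
  rw [zero_add] at hQ
  refine ⟨_, hQ, fun φ hφ t ↦ ?_⟩
  have hφt : φ t ∈ Metric.eball y R := by
    refine lt_of_le_of_lt ?_ (Metric.mem_eball.1 hφ)
    rw [ContinuousMap.edist_eq_iSup]
    exact le_iSup (fun s ↦ edist (φ s) (ContinuousMap.const K y s)) t
  have hsum := (ContinuousMap.evalCLM 𝕜 t).hasSum (hQ.hasSum_sub hφ)
  exact hsum.unique (hH.hasSum_sub hφt)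

end Superposition

section ParametricIntegral

open MeasureTheory Topology

variable {𝕜 G E F : Type*} [NontriviallyNormedField 𝕜] [NormedAddCommGroup G] [NormedSpace 𝕜 G]
  [NormedAddCommGroup E] [NormedSpace 𝕜 E] [NormedAddCommGroup F] [NormedSpace 𝕜 F]

section CompactSpace

variable {K : Type*} [TopologicalSpace K] [CompactSpace K]

lemma analyticAt_integral_continuousMap [NormedSpace ℝ F] [SMulCommClass ℝ 𝕜 F]
    [MeasurableSpace K] [OpensMeasurableSpace K] (μ : Measure K) [IsFiniteMeasure μ]
    {Q : E → C(K, F)} {a : E} (hQ : AnalyticAt 𝕜 Q a) :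
    AnalyticAt 𝕜 (fun x ↦ ∫ t, Q x t ∂μ) a := by
  have h_int (φ : C(K, F)) : Integrable φ μ :=
    φ.continuous.integrable_of_hasCompactSupport (HasCompactSupport.of_compactSpace _)
  let I : C(K, F) →L[𝕜] F := LinearMap.mkContinuous
    { toFun := fun φ ↦ ∫ t, φ t ∂μ
      map_add' := fun φ ψ ↦ integral_add (h_int φ) (h_int ψ)
      map_smul' := fun c φ ↦ integral_smul c φ }
    (μ.real univ) fun φ ↦ by
      rw [mul_comm]
      exact norm_integral_le_of_norm_le_const (.of_forall φ.norm_coe_le_norm)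
  exact (I.analyticAt _).comp hQ

variable (𝕜) in
lemma analyticAt_prodMk_const (φ : C(K, G)) (a : E) :
    AnalyticAt 𝕜 (fun x : E ↦ φ.prodMk (.const K x)) a := by
  let L : E →L[𝕜] C(K, G × E) :=
    { toFun := fun x ↦ .const K (0, x)
      map_add' := fun x y ↦ by ext <;> simp
      map_smul' := fun c x ↦ by ext <;> simp
      cont := ContinuousMap.continuous_const'.comp (by fun_prop) }
  have hL : (fun x : E ↦ φ.prodMk (.const K x)) = fun x ↦ φ.prodMk (.const K 0) + L x := by
    ext x t <;> simp [L]
  rw [hL]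
  exact analyticAt_const.add (L.analyticAt a)

end CompactSpace

lemma eventually_forall_mem_analyticAt [CompleteSpace F] {H : G × E → F} {a : E} {S : Set G}
    (hS : IsCompact S) (hH : ∀ y ∈ S, AnalyticAt 𝕜 H (y, a)) :
    ∀ᶠ x in 𝓝 a, ∀ y ∈ S, AnalyticAt 𝕜 H (y, x) :=
  hS.eventually_forall_of_forall_eventually fun y hy ↦
    (continuous_swap.tendsto (a, y)).eventually (hH y hy).eventually_analyticAt

variable {X : Type*} [TopologicalSpace X] [CompleteSpace F] {H : G × E → F} {γ : X → G} {a : E}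
  {K : Set X}

lemma eventually_continuousOn_comp_prodMk (hK : IsCompact K) (hγ : ContinuousOn γ K)
    (hH : ∀ t ∈ K, AnalyticAt 𝕜 H (γ t, a)) :
    ∀ᶠ x in 𝓝 a, ContinuousOn (fun t ↦ H (γ t, x)) K := by
  filter_upwards [eventually_forall_mem_analyticAt (hK.image_of_continuousOn hγ)
    (forall_mem_image.2 hH)] with x hx t ht
  have hHt : ContinuousAt H (γ t, x) := (hx _ (mem_image_of_mem γ ht)).continuousAt
  exact hHt.comp_continuousWithinAt (f := fun t ↦ (γ t, x))
    ((hγ t ht).prodMk continuousWithinAt_const)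

variable [T2Space X] [MeasurableSpace X] [OpensMeasurableSpace X] [NormedSpace ℝ F]
  [SMulCommClass ℝ 𝕜 F]

lemma analyticAt_setIntegral_of_hasFPowerSeriesOnBall
    {p : FormalMultilinearSeries 𝕜 (G × E) F} {y : G} {r R : ENNReal}
    (hH : HasFPowerSeriesOnBall H p (y, a) R) (hK : IsCompact K) (hγ : ContinuousOn γ K)
    (hrR : r < R) (hγr : ∀ t ∈ K, edist (γ t) y ≤ r)
    (μ : Measure X) [IsFiniteMeasureOnCompacts μ] :
    AnalyticAt 𝕜 (fun x ↦ ∫ t in K, H (γ t, x) ∂μ) a := by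
  have : CompactSpace K := isCompact_iff_compactSpace.1 hK
  have : IsFiniteMeasure (μ.comap ((↑) : K → X)) := by
    refine ⟨?_⟩
    rw [comap_subtype_coe_apply hK.measurableSet]
    simpa using hK.measure_lt_top
  obtain ⟨Q, hQ, hQH⟩ := exists_superposition_hasFPowerSeriesOnBall (K := K) hH
  let Φ : E → C(K, G × E) := fun x ↦ .prodMk ⟨K.domRestrict γ, hγ.domRestrict⟩ (.const K x)
  have hΦ : AnalyticAt 𝕜 Φ a := analyticAt_prodMk_const 𝕜 _ a
  have hΦa : Φ a ∈ Metric.eball (.const K (y, a)) R := by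
    refine lt_of_le_of_lt ?_ hrR
    rw [ContinuousMap.edist_eq_iSup]
    refine iSup_le fun t ↦ ?_
    simpa [Φ, Prod.edist_eq] using! hγr t t.2
  refine (analyticAt_integral_continuousMap (μ.comap (↑))
    ((hQ.analyticOnNhd _ hΦa).comp hΦ)).congr ?_
  filter_upwards [hΦ.continuousAt.eventually_mem (Metric.isOpen_eball.mem_nhds hΦa)] with x hx
  rw [← integral_subtype_comap hK.measurableSet]
  exact integral_congr_ae (.of_forall (hQH _ hx))

lemma exists_mem_nhdsWithin_analyticAt_setIntegral (hK : IsCompact K) (hγ : ContinuousOn γ K)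
    {t₀ : X} (ht₀ : t₀ ∈ K) (hH : AnalyticAt 𝕜 H (γ t₀, a)) :
    ∃ N ∈ 𝓝[K] t₀, N ⊆ K ∧ IsCompact N ∧ ∀ μ : Measure X, IsFiniteMeasureOnCompacts μ →
      AnalyticAt 𝕜 (fun x ↦ ∫ t in N, H (γ t, x) ∂μ) a := by
  obtain ⟨p, R, hp⟩ := hH
  obtain ⟨r, hr, hrR⟩ := exists_between hp.r_pos
  let N : Set X := K ∩ γ ⁻¹' Metric.closedEBall (γ t₀) r
  have hN : IsCompact N := hK.of_isClosed_subset
    (hγ.preimage_isClosed_of_isClosed hK.isClosed Metric.isClosed_closedEBall) inter_subset_left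
  refine ⟨N, ?_, inter_subset_left, hN, fun μ hμ ↦ ?_⟩
  · exact Filter.inter_mem self_mem_nhdsWithin (hγ t₀ ht₀ (Metric.closedEBall_mem_nhds _ hr))
  · exact analyticAt_setIntegral_of_hasFPowerSeriesOnBall hp hN (hγ.mono inter_subset_left) hrR
      (fun t ht ↦ ht.2) μ

theorem analyticAt_setIntegral (hK : IsCompact K) (hγ : ContinuousOn γ K)
    (hH : ∀ t ∈ K, AnalyticAt 𝕜 H (γ t, a)) (μ : Measure X) [IsFiniteMeasureOnCompacts μ] :
    AnalyticAt 𝕜 (fun x ↦ ∫ t in K, H (γ t, x) ∂μ) a := by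
  have hcont := eventually_continuousOn_comp_prodMk hK hγ hH
  -- Quantifying over all measures makes the property stable under unions: the integral over `N \ M`
  -- is an integral over `N` for the measure restricted to `Mᶜ`.
  let p (S : Set X) : Prop := ∃ N ⊆ K, S ⊆ N ∧ MeasurableSet N ∧ ∀ ν : Measure X,
    IsFiniteMeasureOnCompacts ν → AnalyticAt 𝕜 (fun x ↦ ∫ t in N, H (γ t, x) ∂ν) a
  suffices hpK : p K by
    obtain ⟨N, hNK, hKN, -, hN⟩ := hpK
    rw [hKN.antisymm hNK]
    exact hN μ ‹_›
  refine hK.induction_on (p := p) ⟨∅, by simp [analyticAt_const]⟩ ?mono ?union ?nhds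
  case mono =>
    rintro S T hST ⟨N, hNK, hTN, hN⟩
    exact ⟨N, hNK, hST.trans hTN, hN⟩
  case union =>
    rintro S T ⟨M, hMK, hSM, hMm, hM⟩ ⟨N, hNK, hTN, hNm, hN⟩
    refine ⟨M ∪ N, union_subset hMK hNK, union_subset_union hSM hTN, hMm.union hNm,
      fun ν hν ↦ ((hM ν hν).add (hN (ν.restrict Mᶜ) inferInstance)).congr ?_⟩
    filter_upwards [hcont] with x hx
    have h_int : IntegrableOn (fun t ↦ H (γ t, x)) K ν := hx.integrableOn_compact hK
    rw [← union_sdiff_self, setIntegral_union disjoint_sdiff_right (hNm.diff hMm)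
      (h_int.mono_set hMK) (h_int.mono_set (sdiff_subset.trans hNK)), sdiff_eq_compl_inter,
      inter_comm, ← Measure.restrict_restrict hNm, Pi.add_apply]
  case nhds =>
    intro t₀ ht₀
    obtain ⟨N, hN, hNK, hNc, hNa⟩ :=
      exists_mem_nhdsWithin_analyticAt_setIntegral hK hγ ht₀ (hH t₀ ht₀)
    exact ⟨N, hN, N, hNK, Subset.rfl, hNc.measurableSet, hNa⟩

end ParametricIntegral

section CircleAverage

open Real Metric

variable {E F : Type*} [NormedAddCommGroup E] [NormedSpace ℂ E] [NormedAddCommGroup F]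
  [NormedSpace ℂ F]

lemma circleIntegrable_sub_div_sub_smul {h : ℂ → F} {c : ℂ} {R : ℝ}
    (hh : ContinuousOn h (sphere c |R|)) {z : ℂ} (hz : z ∉ sphere c |R|) :
    CircleIntegrable (fun w ↦ ((w - c) / (w - z)) • h w) c R := by
  refine ContinuousOn.circleIntegrable' (.smul (.div (by fun_prop) (by fun_prop) ?_) hh)
  exact fun w hw ↦ sub_ne_zero.2 (ne_of_mem_of_not_mem hw hz)

variable [CompleteSpace F]

theorem sum_roots_eq_circleAverage {p : Polynomial ℂ} {h : ℂ → F} {c : ℂ} {R : ℝ} (hp : p ≠ 0)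
    (hroots : ∀ z ∈ p.roots, z ∈ ball c |R|) (hh : DiffContOnCl ℂ h (ball c |R|)) :
    (p.roots.map h).sum =
      circleAverage (fun w ↦ ((w - c) * (p.derivative.eval w / p.eval w)) • h w) c R := by
  have hpole : ∀ z ∈ p.roots, z ∉ sphere c |R| := fun z hz ↦
    disjoint_left.1 sphere_disjoint_ball.symm (hroots z hz)
  have hdiff (z : ℂ) : DiffContOnCl ℂ (p.roots.count z • h) (ball c |R|) :=
    hh.const_smul _
  have hlog : ∀ w ∈ sphere c |R|, ((w - c) * (p.derivative.eval w / p.eval w)) • h w =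
      ∑ z ∈ p.roots.toFinset, ((w - c) / (w - z)) • p.roots.count z • h w := by
    intro w hw
    have hpw : p.eval w ≠ 0 := fun h0 ↦ hpole w ((Polynomial.mem_roots hp).2 h0) hw
    rw [(IsAlgClosed.splits p).eval_derivative_div_eval_of_ne_zero hpw,
      Finset.sum_multiset_map_count, Finset.mul_sum, Finset.sum_smul]
    refine Finset.sum_congr rfl fun z _ ↦ ?_
    rw [mul_smul_comm, mul_one_div, smul_assoc, smul_comm]
  have h_int : ∀ z ∈ p.roots.toFinset,
      CircleIntegrable (fun w ↦ ((w - c) / (w - z)) • p.roots.count z • h w) c R := fun z hz ↦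
    circleIntegrable_sub_div_sub_smul ((hdiff z).continuousOn_ball.mono sphere_subset_closedBall)
      (hpole z (Multiset.mem_toFinset.1 hz))
  rw [circleAverage_congr_sphere hlog, circleAverage_fun_sum h_int, Finset.sum_multiset_map_count]
  exact Finset.sum_congr rfl fun z hz ↦
    ((hdiff z).circleAverage_smul_div (hroots z (Multiset.mem_toFinset.1 hz))).symm

theorem analyticAt_circleAverage {H : ℂ × E → F} {a : E} {c : ℂ} {R : ℝ}
    (hH : ∀ w ∈ sphere c |R|, AnalyticAt ℂ H (w, a)) :
    AnalyticAt ℂ (fun x ↦ circleAverage (fun w ↦ H (w, x)) c R) a := by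
  simp only [circleAverage_def, intervalIntegral.integral_of_le two_pi_pos.le,
    ← MeasureTheory.integral_Icc_eq_integral_Ioc]
  exact (analyticAt_setIntegral isCompact_Icc (continuous_circleMap c R).continuousOn
    (fun t _ ↦ hH _ (circleMap_mem_sphere' c R t)) _).const_smul

end CircleAverage

section RootAverage

open Real Metric Topology

variable {E F : Type*} [NormedAddCommGroup E] [NormedSpace ℂ E] [NormedAddCommGroup F]
  [NormedSpace ℂ F]

/-- The mean of `h` over the `k`-th roots of `z`, counted with multiplicity. Applied in the first
variable, it turns a function of `v` into a function of `x = r_k(v)`. The value is `0` for `k = 0`,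
since `Polynomial.nthRoots 0 z` is empty. -/
def rootAverage (k : ℕ) (h : ℂ → F) (z : ℂ) : F :=
  (k : ℂ)⁻¹ • ((Polynomial.nthRoots k z).map h).sum

variable {k : ℕ}

lemma norm_sub_rootAverage_le (hk : k ≠ 0) {h : ℂ → F} {z : ℂ} {c : F} {M : ℝ}
    (hM : ∀ w, w ^ k = z → ‖c - h w‖ ≤ M) : ‖c - rootAverage k h z‖ ≤ M := by
  have hcard : (Polynomial.nthRoots k z).card = k := by
    rw [Polynomial.nthRoots, ← (IsAlgClosed.splits _).natDegree_eq_card_roots,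
      Polynomial.natDegree_X_pow_sub_C]
  have hc : c - rootAverage k h z =
      (k : ℂ)⁻¹ • ((Polynomial.nthRoots k z).map fun w ↦ c - h w).sum := by
    rw [Multiset.sum_map_sub, smul_sub, rootAverage, Multiset.map_const', hcard,
      Multiset.sum_replicate, ← Nat.cast_smul_eq_nsmul ℂ,
      inv_smul_smul₀ (Nat.cast_ne_zero.2 hk)]
  have hsum : ‖((Polynomial.nthRoots k z).map fun w ↦ c - h w).sum‖ ≤ k * M := by
    refine (norm_multiset_sum_le _).trans ?_
    simpa only [Multiset.card_map, hcard, nsmul_eq_mul] using Multiset.sum_le_card_nsmul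
      (((Polynomial.nthRoots k z).map fun w ↦ c - h w).map norm) M
      (by simpa [Polynomial.mem_nthRoots hk.pos] using hM)
  rw [hc, norm_smul, norm_inv, Complex.norm_natCast, inv_mul_le_iff₀ (by positivity)]
  exact hsum

lemma norm_rootAverage_le (hk : k ≠ 0) {h : ℂ → F} {z : ℂ} {M : ℝ}
    (hM : ∀ w, w ^ k = z → ‖h w‖ ≤ M) : ‖rootAverage k h z‖ ≤ M := by
  simpa using norm_sub_rootAverage_le hk (c := (0 : F)) (h := h) (by simpa using hM)

lemma norm_lt_of_norm_pow_lt {A : Type*} [NormedDivisionRing A] {w : A} {s : ℝ} (hs : 0 ≤ s)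
    (h : ‖w ^ k‖ < s ^ k) : ‖w‖ < s :=
  lt_of_pow_lt_pow_left₀ k hs (norm_pow w k ▸ h)

variable [CompleteSpace F]

lemma rootAverage_eq_circleAverage (hk : k ≠ 0) {h : ℂ → F} {z : ℂ} {s : ℝ} (hs : 0 ≤ s)
    (hz : ‖z‖ < s ^ k) (hh : DiffContOnCl ℂ h (ball 0 s)) :
    rootAverage k h z = circleAverage (fun w ↦ (w ^ k / (w ^ k - z)) • h w) 0 s := by
  have hroots : ∀ w ∈ Polynomial.nthRoots k z, w ∈ ball (0 : ℂ) |s| := by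
    intro w hw
    rw [Polynomial.mem_nthRoots hk.pos] at hw
    rw [abs_of_nonneg hs, mem_ball_zero_iff]
    exact norm_lt_of_norm_pow_lt hs (hw ▸ hz)
  rw [rootAverage, Polynomial.nthRoots, sum_roots_eq_circleAverage
    (Polynomial.X_pow_sub_C_ne_zero hk.pos z) hroots (by rwa [abs_of_nonneg hs]),
    ← circleAverage_fun_smul]
  congr! 2 with w
  have hk' : (k : ℂ) ≠ 0 := Nat.cast_ne_zero.2 hk
  simp only [smul_smul, sub_zero, Polynomial.derivative_sub, Polynomial.derivative_X_pow,
    Polynomial.derivative_C, Polynomial.eval_mul, Polynomial.eval_sub, Polynomial.eval_pow,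
    Polynomial.eval_X, Polynomial.eval_C]
  congr 1
  rw [← mul_pow_sub_one hk w]
  field_simp

lemma analyticAt_rootAverage (hk : k ≠ 0) {g : ℂ × E → F} {a : E} {z : ℂ} {s : ℝ} (hs : 0 ≤ s)
    (hz : ‖z‖ < s ^ k) (hg : ∀ w ∈ closedBall 0 s, AnalyticAt ℂ g (w, a)) :
    AnalyticAt ℂ (fun q : ℂ × E ↦ rootAverage k (fun w ↦ g (w, q.2)) q.1) (z, a) := by
  let H : ℂ × ℂ × E → F := fun u ↦ (u.1 ^ k / (u.1 ^ k - u.2.1)) • g (u.1, u.2.2)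
  have hH : ∀ w ∈ sphere (0 : ℂ) |s|, AnalyticAt ℂ H (w, z, a) := by
    intro w hw
    rw [abs_of_nonneg hs] at hw
    have hne : w ^ k - z ≠ 0 := by
      refine sub_ne_zero.2 fun h ↦ hz.ne ?_
      rw [← h, norm_pow, mem_sphere_zero_iff_norm.1 hw]
    have hpow : AnalyticAt ℂ (fun u : ℂ × ℂ × E ↦ u.1 ^ k) (w, z, a) := analyticAt_fst.pow k
    have hsnd : AnalyticAt ℂ (fun u : ℂ × ℂ × E ↦ u.2.1) (w, z, a) :=
      analyticAt_fst.comp analyticAt_snd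
    have hpair : AnalyticAt ℂ (fun u : ℂ × ℂ × E ↦ (u.1, u.2.2)) (w, z, a) :=
      analyticAt_fst.prod (analyticAt_snd.comp analyticAt_snd)
    exact (hpow.div (hpow.sub hsnd) hne).smul
      ((hg w (sphere_subset_closedBall hw)).comp_of_eq hpair rfl)
  refine (analyticAt_circleAverage hH).congr ?_
  have hz' : ∀ᶠ q : ℂ × E in 𝓝 (z, a), ‖q.1‖ < s ^ k :=
    (continuous_fst.norm.tendsto (z, a)).eventually_lt_const hz
  have hg' : ∀ᶠ q : ℂ × E in 𝓝 (z, a), ∀ w ∈ closedBall 0 s, AnalyticAt ℂ g (w, q.2) :=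
    (continuous_snd.tendsto (z, a)).eventually
      (eventually_forall_mem_analyticAt (isCompact_closedBall 0 s) hg)
  filter_upwards [hz', hg'] with q hqz hqg
  have hd : DifferentiableOn ℂ (fun w ↦ g (w, q.2)) (closedBall 0 s) := fun w hw ↦
    ((hqg w hw).comp_of_eq (analyticAt_id.prod analyticAt_const)
      rfl).differentiableAt.differentiableWithinAt
  exact (rootAverage_eq_circleAverage hk hs hqz (hd.diffContOnCl_ball subset_rfl)).symm

end RootAverage

section Ramification

lemma analyticAt_update {𝕜 ι : Type*} [NontriviallyNormedField 𝕜] [Fintype ι] [DecidableEq ι]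
    (i : ι) (q : 𝕜 × (ι → 𝕜)) :
    AnalyticAt 𝕜 (fun q : 𝕜 × (ι → 𝕜) ↦ Function.update q.2 i q.1) q := by
  refine analyticAt_pi_iff.2 fun j ↦ ?_
  obtain rfl | hj := eq_or_ne j i
  · simpa only [Function.update_self] using analyticAt_fst
  · simp only [Function.update_of_ne hj]
    exact ((ContinuousLinearMap.proj (R := 𝕜) (φ := fun _ : ι ↦ 𝕜) j).analyticAt q.2).comp
      analyticAt_snd

variable {d k : ℕ} {r ρ : ℝ}

lemma polydisk_mono (h : ρ ≤ r) : polydisk d ρ ⊆ polydisk d r :=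
  fun _ hx j ↦ (hx j).trans_le h

lemma PSector_mono {P : (Fin d → ℂ) → ℂ} {α β : ℝ} (h : ρ ≤ r) :
    PSector d P α β ρ ⊆ PSector d P α β r :=
  fun _ hx ↦ ⟨fun j ↦ ⟨(hx.1 j).1, (hx.1 j).2.trans_le h⟩, hx.2⟩

lemma update_mem_polydisk {x : Fin d → ℂ} {i : Fin d} {w : ℂ} (hx : x ∈ polydisk d r)
    (hw : ‖w‖ < r) : Function.update x i w ∈ polydisk d r := by
  intro j
  obtain rfl | hj := eq_or_ne j i
  · rwa [Function.update_self]
  · rw [Function.update_of_ne hj]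
    exact hx j

lemma ramification_update {x : Fin (d + 1) → ℂ} {w : ℂ} (hw : w ^ k = x 0) :
    ramification d k (Function.update x 0 w) = x := by
  ext j
  obtain rfl | hj := eq_or_ne j 0
  · simp [ramification, hw]
  · simp [ramification, hj]

lemma update_mem_PSector {P : (Fin (d + 1) → ℂ) → ℂ} {α β : ℝ} {x : Fin (d + 1) → ℂ} {w : ℂ}
    (hk : k ≠ 0) (hx : x ∈ PSector (d + 1) P α β r) (hw : w ^ k = x 0) (hwr : ‖w‖ < r) :
    Function.update x 0 w ∈ PSector (d + 1) (fun v ↦ P (ramification d k v)) α β r := by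
  refine ⟨fun j ↦ ?_, ?_⟩
  · obtain rfl | hj := eq_or_ne j 0
    · rw [Function.update_self]
      refine ⟨norm_pos_iff.2 fun hw0 ↦ norm_pos_iff.1 (hx.1 0).1 ?_, hwr⟩
      rw [← hw, hw0, zero_pow hk]
    · rw [Function.update_of_ne hj]
      exact hx.1 j
  · simp only [ramification_update hw]
    exact hx.2

variable {F : Type*} [NormedAddCommGroup F] [NormedSpace ℂ F] [CompleteSpace F]

lemma analyticAt_rootAverage_update {g : (Fin d → ℂ) → F} {x : Fin d → ℂ} {i : Fin d}
    (hk : k ≠ 0) (hg : AnalyticOnNhd ℂ g (polydisk d r)) (hx : x ∈ polydisk d r)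
    (hxk : ‖x i‖ < r ^ k) :
    AnalyticAt ℂ (fun x ↦ rootAverage k (fun w ↦ g (Function.update x i w)) (x i)) x := by
  obtain ⟨w, hw⟩ := IsAlgClosed.exists_pow_nat_eq (x i) hk.pos
  have hr : 0 ≤ r := (norm_nonneg _).trans (hx i).le
  obtain ⟨s, hws, hsr⟩ := exists_between (norm_lt_of_norm_pow_lt hr (hw ▸ hxk))
  have hs : 0 ≤ s := (norm_nonneg w).trans hws.le
  have hxs : ‖x i‖ < s ^ k := by
    rw [← hw, norm_pow]
    exact pow_lt_pow_left₀ hws (norm_nonneg w) hk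
  have hg' : ∀ v ∈ Metric.closedBall 0 s, AnalyticAt ℂ
      (fun q : ℂ × (Fin d → ℂ) ↦ g (Function.update q.2 i q.1)) (v, x) := fun v hv ↦
    (hg _ (update_mem_polydisk hx
      ((mem_closedBall_zero_iff.1 hv).trans_lt hsr))).comp_of_eq (analyticAt_update i (v, x)) rfl
  have hproj : AnalyticAt ℂ (fun x : Fin d → ℂ ↦ (x i, x)) x :=
    ((ContinuousLinearMap.proj (R := ℂ) (φ := fun _ : Fin d ↦ ℂ) i).analyticAt x).prod analyticAt_id
  exact (analyticAt_rootAverage hk hs hxs hg').comp_of_eq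
    (f := fun x : Fin d → ℂ ↦ (x i, x)) hproj rfl

theorem P_asymptotics_stable_under_ramification_general (hk : k ≠ 0) (hρ : ρ ≤ r)
    (hρk : ρ ≤ r ^ k) {P : (Fin (d + 1) → ℂ) → ℂ} {α β : ℝ} {f : (Fin (d + 1) → ℂ) → F}
    {g : ℕ → (Fin (d + 1) → ℂ) → F} {C : ℕ → ℝ}
    (hgA : ∀ n, AnalyticOnNhd ℂ (g n) (polydisk (d + 1) r))
    (hgB : ∀ n, ∃ M, ∀ v ∈ polydisk (d + 1) r, ‖g n v‖ ≤ M)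
    (hest : ∀ n, ∀ v ∈ PSector (d + 1) (fun w ↦ P (ramification d k w)) α β r,
      ‖f (ramification d k v) - g n v‖ ≤ C n * ‖P (ramification d k v)‖ ^ n) :
    ∃ fn : ℕ → (Fin (d + 1) → ℂ) → F,
      (∀ n, AnalyticOnNhd ℂ (fn n) (polydisk (d + 1) ρ)) ∧
      (∀ n, ∃ M, ∀ x ∈ polydisk (d + 1) ρ, ‖fn n x‖ ≤ M) ∧
      (∀ n, ∀ x ∈ PSector (d + 1) P α β ρ, ‖f x - fn n x‖ ≤ C n * ‖P x‖ ^ n) := by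
  have hroot {x : Fin (d + 1) → ℂ} {w : ℂ} (hx : x ∈ polydisk (d + 1) ρ) (hw : w ^ k = x 0) :
      ‖w‖ < r :=
    norm_lt_of_norm_pow_lt ((norm_nonneg _).trans ((hx 0).le.trans hρ))
      (hw ▸ (hx 0).trans_le hρk)
  refine ⟨fun n x ↦ rootAverage k (fun w ↦ g n (Function.update x 0 w)) (x 0),
    fun n x hx ↦ ?analytic, fun n ↦ ?bounded, fun n x hx ↦ ?estimate⟩
  case analytic =>
    exact analyticAt_rootAverage_update hk (hgA n) (polydisk_mono hρ hx) ((hx 0).trans_le hρk)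
  case bounded =>
    obtain ⟨M, hM⟩ := hgB n
    exact ⟨M, fun x hx ↦ norm_rootAverage_le hk fun w hw ↦
      hM _ (update_mem_polydisk (polydisk_mono hρ hx) (hroot hx hw))⟩
  case estimate =>
    refine norm_sub_rootAverage_le hk fun w hw ↦ ?_
    have hwr : ‖w‖ < r := hroot (fun j ↦ (hx.1 j).2) hw
    simpa only [ramification_update hw] using
      hest n _ (update_mem_PSector hk (PSector_mono hρ hx) hw hwr)

end Ramification

/-- **Stability of `P`-asymptotic expansions under ramification** (Proposition 6.11).
If `f ∘ r_k` admits a `(P∘r_k)`-asymptotic expansion in the estimate sense with constants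
`C_n`, then `f` admits a `P`-asymptotic expansion in the estimate sense with the same
constants `C_n`. -/
theorem P_asymptotics_stable_under_ramification
    (d : ℕ) (k : ℕ) (hk : 2 ≤ k) (ρ₀ : ℝ) (hρ₀ : 0 < ρ₀)
    (P : (Fin (d + 1) → ℂ) → ℂ) (hP : AnalyticOnNhd ℂ P (polydisk (d + 1) ρ₀))
    (hP0 : P 0 = 0) (hPne : ∃ x ∈ polydisk (d + 1) ρ₀, P x ≠ 0)
    (α β : ℝ) (hαβ : α < β) (h2π : β ≤ α + 2 * Real.pi)
    (f : (Fin (d + 1) → ℂ) → ℂ)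
    (hf : AnalyticOnNhd ℂ f (PSector (d + 1) P α β ρ₀))
    (r' : ℝ) (hr' : 0 < r')
    (himg : ∀ v ∈ polydisk (d + 1) r', ramification d k v ∈ polydisk (d + 1) ρ₀)
    (g : ℕ → (Fin (d + 1) → ℂ) → ℂ) (C : ℕ → ℝ)
    (hgA : ∀ n, AnalyticOnNhd ℂ (g n) (polydisk (d + 1) r'))
    (hgB : ∀ n, ∃ M, ∀ v ∈ polydisk (d + 1) r', ‖g n v‖ ≤ M)
    (hCpos : ∀ n, 0 < C n)
    (hest : ∀ n, ∀ v ∈ PSector (d + 1) (fun w => P (ramification d k w)) α β r',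
      ‖f (ramification d k v) - g n v‖ ≤
        C n * ‖P (ramification d k v)‖ ^ n) :
    ∃ ρ > 0, ρ ≤ ρ₀ ∧
      ∃ fn : ℕ → (Fin (d + 1) → ℂ) → ℂ,
        (∀ n, AnalyticOnNhd ℂ (fn n) (polydisk (d + 1) ρ)) ∧
        (∀ n, ∃ M, ∀ x ∈ polydisk (d + 1) ρ, ‖fn n x‖ ≤ M) ∧
        (∀ n, ∀ x ∈ PSector (d + 1) P α β ρ,
          ‖f x - fn n x‖ ≤ C n * ‖P x‖ ^ n) := by
  exact ⟨min ρ₀ (min r' (r' ^ k)), by positivity, min_le_left _ _,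
    P_asymptotics_stable_under_ramification_general (by omega) (by simp) (by simp) hgA hgB hest⟩
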